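/- For every integer r ≥ 1, the Genocchi numbers of the second kind and the Legendre–Stirling numbers are related by (as rational numbers) g(r) = Σ_{j=1}^{r} (−1)^{r+j} · (j!)² · d(r,j). -/

import Mathlib

/-!
Set `H r x = (x!)² G(r,x)`. The recursion for `G` becomes `H r x = H (r-1) (x+1) - x(x+1) H (r-1) x`,
while the Legendre–Stirling numbers satisfy the triangular recurrence
`d(r+1,j+1) = d(r,j) + (j+1)(j+2) d(r,j+1)` (`legendreStirling_succ_succ`). Unfolding `H` step by step
from `H (n+k) 1` therefore produces, after `n-1` steps, the coefficients `(-1)^(n+j) d(n,j)`: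
`H (n+k) 1 = ∑ j ≤ n, (-1)^(n+j) d(n,j) H (k+1) j` (`genG_add_eq_sum`). The theorem is the case
`k = 0`, where `G(1,j) = 1`.

The unfolding also needs `d(n,j) = 0` for `j > n ≥ 1` (`legendreStirling_eq_zero`). By the recurrence
this reduces to `n = 1`, which follows from the closed form of `d(0,j)`, a telescoping sum.
-/

/-- `G(r,x)` for `r ≥ 1`, `x ≥ 0`: `G(1,x) = 1` and
`G(r,x) = (x+1)²·G(r−1,x+1) − x·(x+1)·G(r−1,x)` for `r ≥ 2`.
The Genocchi numbers of the second kind are `g(r) = G(r,1)`. -/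
def genG : ℕ → ℕ → ℤ
  | 0, _ => 1
  | 1, _ => 1
  | r + 2, x =>
      ((x : ℤ) + 1) ^ 2 * genG (r + 1) (x + 1) - (x : ℤ) * ((x : ℤ) + 1) * genG (r + 1) x

/-- The Legendre–Stirling numbers
`d(r,j) = Σ_{ℓ=1}^{j} (−1)^{ℓ+j}·(2ℓ+1)·(ℓ²+ℓ)^r / ((ℓ+j+1)!·(j−ℓ)!)`. -/
def legendreStirling (r j : ℕ) : ℚ :=
  ∑ ℓ ∈ Finset.Icc 1 j,
    (-1 : ℚ) ^ (ℓ + j) * (2 * ℓ + 1) * ((ℓ : ℚ) ^ 2 + ℓ) ^ r /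
      ((Nat.factorial (ℓ + j + 1)) * (Nat.factorial (j - ℓ)))

lemma legendreStirling_zero_right (r : ℕ) : legendreStirling r 0 = 0 := by
  simp [legendreStirling]

/-- The triangular recurrence. It rests on `(ℓ² + ℓ) - (j+1)(j+2) = (ℓ - (j+1)) (ℓ + j + 2)`, whose
factors cancel against the two factorials in the denominator. -/
lemma legendreStirling_succ_succ (r j : ℕ) :
    legendreStirling (r + 1) (j + 1) =
      legendreStirling r j + ((j : ℚ) + 1) * (j + 2) * legendreStirling r (j + 1) := by
  unfold legendreStirling
  rw [Finset.sum_Icc_succ_top (by omega), Finset.sum_Icc_succ_top (by omega),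
    mul_add (((j : ℚ) + 1) * (j + 2)), Finset.mul_sum, ← add_assoc (Finset.sum _ _),
    ← Finset.sum_add_distrib]
  congr 1
  · refine Finset.sum_congr rfl fun l hl => ?_
    obtain ⟨k, rfl⟩ := Nat.exists_eq_add_of_le (Finset.mem_Icc.mp hl).2
    rw [show l + (l + k + 1) + 1 = (l + (l + k) + 1) + 1 by ring,
      show l + k + 1 - l = k + 1 by omega, show l + k - l = k by omega,
      Nat.factorial_succ (l + (l + k) + 1), Nat.factorial_succ k]
    have h1 : ((l + (l + k) + 1).factorial : ℚ) ≠ 0 := by positivity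
    have h2 : (k.factorial : ℚ) ≠ 0 := by positivity
    push_cast
    field_simp
    ring
  · push_cast
    ring

/-- Partial sums of `d(0,j)` telescope. The factor `j - m` makes the formula valid at `m = j`. -/
lemma legendreStirling_zero_partial_sum (j m : ℕ) (hj : 1 ≤ j) (hm : m ≤ j) :
    ∑ ℓ ∈ Finset.Icc 1 m, (-1 : ℚ) ^ (ℓ + j) * (2 * ℓ + 1) /
        ((Nat.factorial (ℓ + j + 1)) * (Nat.factorial (j - ℓ))) =
      (-1) ^ (j + 1) / ((j + 1).factorial * j.factorial) +
        (-1) ^ (j + m) * (m + 1) * ((j : ℚ) - m) /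
          (j * (m + j + 1).factorial * (j - m).factorial) := by
  induction m with
  | zero =>
    have : (j : ℚ) ≠ 0 := by positivity
    simp
    field_simp
    ring
  | succ m ih =>
    rw [Finset.sum_Icc_succ_top (by omega), ih (by omega)]
    obtain ⟨k, rfl⟩ := Nat.exists_eq_add_of_le hm
    rw [show m + 1 + (m + 1 + k) + 1 = (m + (m + 1 + k) + 1) + 1 by ring,
      show m + 1 + k - m = k + 1 by omega, show m + 1 + k - (m + 1) = k by omega,
      Nat.factorial_succ (m + (m + 1 + k) + 1), Nat.factorial_succ k, add_assoc]
    congr 1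
    have h1 : ((m + (m + 1 + k) + 1).factorial : ℚ) ≠ 0 := by positivity
    have h2 : (k.factorial : ℚ) ≠ 0 := by positivity
    have h3 : (m : ℚ) + 1 + k ≠ 0 := by positivity
    push_cast
    field_simp
    ring

/-- The value is nonzero because the defining sum omits the term `ℓ = 0`. -/
lemma legendreStirling_zero_left (j : ℕ) (hj : 1 ≤ j) :
    legendreStirling 0 j = (-1) ^ (j + 1) / ((j + 1).factorial * j.factorial) := by
  simpa [legendreStirling] using legendreStirling_zero_partial_sum j j hj le_rfl

lemma legendreStirling_eq_zero (n j : ℕ) (hn : 1 ≤ n) (hj : n < j) :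
    legendreStirling n j = 0 := by
  induction n, hn using Nat.le_induction generalizing j with
  | base =>
    obtain ⟨i, rfl⟩ := show ∃ i, j = i + 1 + 1 from ⟨j - 2, by omega⟩
    rw [legendreStirling_succ_succ 0,
      legendreStirling_zero_left _ (by omega), legendreStirling_zero_left _ (by omega),
      Nat.factorial_succ (i + 1 + 1), Nat.factorial_succ (i + 1)]
    push_cast
    field_simp
    ring
  | succ n hn ih =>
    obtain ⟨i, rfl⟩ : ∃ i, j = i + 1 := ⟨j - 1, by omega⟩
    rw [legendreStirling_succ_succ, ih _ (by omega), ih _ (by omega)]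
    simp

/-- Unfolding the recursion of `G` in `n - 1` steps, starting from `G(n+k,1)`. The index `j = 0`
contributes nothing since `d(n,0) = 0`; including it makes the index shift cleaner. -/
lemma genG_add_eq_sum (n : ℕ) (hn : 1 ≤ n) (k : ℕ) :
    (genG (n + k) 1 : ℚ) = ∑ j ∈ Finset.range (n + 1),
      (-1 : ℚ) ^ (n + j) * (Nat.factorial j) ^ 2 * legendreStirling n j * genG (k + 1) j := by
  induction n, hn using Nat.le_induction generalizing k with
  | base =>
    have : legendreStirling 1 1 = 1 := by
      norm_num [legendreStirling, Nat.factorial]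
    simp [Finset.sum_range_succ, legendreStirling_zero_right, this, add_comm]
  | succ n hn ih =>
    rw [show n + 1 + k = n + (k + 1) by ring, ih, Finset.sum_range_succ' _ (n + 1),
      legendreStirling_zero_right]
    set B : ℕ → ℚ := fun j => (-1 : ℚ) ^ (n + j) * (Nat.factorial j) ^ 2 * (j * (j + 1)) *
      legendreStirling n j * genG (k + 1) j with hB
    -- The terms weighted by `j(j+1)` can be shifted freely: they vanish at `0` and at `n + 1`.
    have hshift : ∑ j ∈ Finset.range (n + 1), B (j + 1) = ∑ j ∈ Finset.range (n + 1), B j := by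
      have h := Finset.sum_range_succ' B (n + 1)
      rw [Finset.sum_range_succ] at h
      have h0 : B 0 = 0 := by simp [hB]
      have h1 : B (n + 1) = 0 := by
        simp [hB, legendreStirling_eq_zero n (n + 1) hn (by omega)]
      linarith
    have hL : ∀ j, (-1 : ℚ) ^ (n + j) * (Nat.factorial j) ^ 2 * legendreStirling n j *
        genG (k + 1 + 1) j = (-1 : ℚ) ^ (n + j) * (Nat.factorial (j + 1)) ^ 2 *
          legendreStirling n j * genG (k + 1) (j + 1) - B j := by
      intro j
      rw [genG, Nat.factorial_succ, hB]
      push_cast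
      ring
    have hR : ∀ j, (-1 : ℚ) ^ (n + 1 + (j + 1)) * (Nat.factorial (j + 1)) ^ 2 *
        legendreStirling (n + 1) (j + 1) * genG (k + 1) (j + 1) =
          (-1 : ℚ) ^ (n + j) * (Nat.factorial (j + 1)) ^ 2 *
            legendreStirling n j * genG (k + 1) (j + 1) - B (j + 1) := by
      intro j
      rw [legendreStirling_succ_succ, hB]
      push_cast
      ring
    simp only [hL, hR, Finset.sum_sub_distrib, hshift]
    simp

/-- For every `r ≥ 1`, the Genocchi numbers of the second kind `g(r) = G(r,1)`
and the Legendre–Stirling numbers `d(r,j)` are related, as rational numbers, by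
`g(r) = Σ_{j=1}^{r} (−1)^{r+j}·(j!)²·d(r,j)`. -/
theorem genocchi_eq_sum_legendreStirling (r : ℕ) (hr : 1 ≤ r) :
    (genG r 1 : ℚ) =
      ∑ j ∈ Finset.Icc 1 r,
        (-1 : ℚ) ^ (r + j) * (Nat.factorial j) ^ 2 * legendreStirling r j := by
  have h := genG_add_eq_sum r hr 0
  rw [Finset.range_eq_Ico, Finset.sum_eq_sum_Ico_succ_bot (by omega)] at h
  simpa [legendreStirling_zero_right, genG, Finset.Ico_add_one_right_eq_Icc] using h
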